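/- Let n ≥ 1, m ≥ 1, let h₁, …, h_m be n×n complex matrices, and let σ ∈ S_m. Then the trace of the endomorphism (h₁ ⊗ ⋯ ⊗ h_m) ∘ π(σ) of (ℂ^n)^{⊗m} equals the product, over the cycles of σ, of the traces of the matrices multiplied along each cycle: for each cycle of σ of length k containing an element a, the corresponding factor is tr(h_a · h_{σ⁻¹(a)} · h_{σ⁻²(a)} ⋯ h_{σ^{-(k-1)}(a)}) (this factor is independent of the chosen element a of the cycle, by cyclic invariance of the trace). -/

import Mathlib

open scoped TensorProduct

/-- The permutation operator `π(σ)` on `(ℂ^n)^{⊗m}`, determined by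
`π(σ)(v₁ ⊗ ⋯ ⊗ v_m) = v_{σ⁻¹(1)} ⊗ ⋯ ⊗ v_{σ⁻¹(m)}`. -/
noncomputable def permMap (n m : ℕ) (σ : Equiv.Perm (Fin m)) :
    (⨂[ℂ] _ : Fin m, (Fin n → ℂ)) →ₗ[ℂ] ⨂[ℂ] _ : Fin m, (Fin n → ℂ) :=
  (PiTensorProduct.reindex ℂ (fun _ : Fin m => Fin n → ℂ) σ).toLinearMap

lemma list_prod_entry {n : Type*} [Fintype n] [DecidableEq n] (k : ℕ) (A : Fin (k+1) → Matrix n n ℂ) (x y : n) :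
    (List.ofFn A).prod x y = ∑ g : Fin k → n, ∏ j, A j ((Fin.cons x g : Fin (k+1) → n) j) ((Fin.snoc g y : Fin (k+1) → n) j) := by
  induction k generalizing x with
  | zero => simp [List.ofFn_succ, Fin.snoc]
  | succ k ih =>
    rw [List.ofFn_succ, List.prod_cons, Matrix.mul_apply, ← (Fin.consEquiv (fun _ => n)).sum_comp, Fintype.sum_prod_type]
    refine Finset.sum_congr rfl fun z _ => ?_
    rw [ih, Finset.mul_sum]
    refine Finset.sum_congr rfl fun g _ => ?_
    have hc : (Fin.consEquiv fun _ : Fin (k+1) => n) (z, g) = (Fin.cons z g : Fin (k+1) → n) := rfl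
    have hs : (Fin.snoc (Fin.cons z g : Fin (k+1) → n) y : Fin (k+2) → n) =
        (Fin.cons z (Fin.snoc g y : Fin (k+1) → n) : Fin (k+2) → n) :=
      (Fin.cons_snoc_eq_snoc_cons z g y).symm
    rw [hc, hs, Fin.prod_univ_succ (n := k+1)]
    simp only [Fin.cons_zero, Fin.cons_succ]

lemma trace_list_prod {n : Type*} [Fintype n] [DecidableEq n] (k : ℕ) (A : Fin (k+1) → Matrix n n ℂ) :
    Matrix.trace (List.ofFn A).prod = ∑ f : Fin (k+1) → n, ∏ j, A j (f j) (f (j+1)) := by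
  rw [← (Fin.consEquiv (fun _ => n)).sum_comp, Fintype.sum_prod_type, Matrix.trace]
  refine Finset.sum_congr rfl fun x _ => ?_
  rw [Matrix.diag_apply, list_prod_entry]
  refine Finset.sum_congr rfl fun g _ => Finset.prod_congr rfl fun j _ => ?_
  simp only [Fin.consEquiv_apply]
  congr 1
  refine Fin.lastCases ?_ (fun i => ?_) j
  · simp
  · simp [Fin.coeSucc_eq_succ]

lemma trace_list_prod' {n : Type*} [Fintype n] [DecidableEq n] (k : ℕ) [NeZero k] (A : ℕ → Matrix n n ℂ) :
    Matrix.trace ((List.range k).map A).prod = ∑ f : Fin k → n, ∏ j : Fin k, A j (f j) (f (j+1)) := by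
  obtain ⟨k, rfl⟩ := Nat.exists_eq_succ_of_ne_zero (NeZero.ne k)
  rw [← trace_list_prod k (fun j => A j)]
  congr 2
  rw [List.ofFn_eq_map, ← List.map_coe_finRange_eq_range, List.map_map]
  rfl

lemma gen_sum {n α ι : Type*} [Fintype n] [DecidableEq n] [Fintype α] [DecidableEq α] [Fintype ι] [DecidableEq ι]
    (h : α → Matrix n n ℂ) (τ : α → α) (k : ι → ℕ) [∀ i, NeZero (k i)]
    (e : (Σ i, Fin (k i)) ≃ α) (he : ∀ i j, τ (e ⟨i, j⟩) = e ⟨i, j+1⟩) (b : ι → ℕ → α)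
    (hb : ∀ i (j : Fin (k i)), e ⟨i, j⟩ = b i j) :
    ∑ f : α → n, ∏ a, h a (f a) (f (τ a)) =
      ∏ i, Matrix.trace ((List.range (k i)).map fun j => h (b i j)).prod := by
  simp only [trace_list_prod']
  rw [Finset.prod_univ_sum, Fintype.piFinset_univ]
  symm
  refine Fintype.sum_equiv ((Equiv.piCurry (fun (i : ι) (_ : Fin (k i)) => n)).symm.trans
    (e.arrowCongr (Equiv.refl n))) _ _ fun g => ?_
  rw [← e.prod_comp, Fintype.prod_sigma]
  refine Finset.prod_congr rfl fun i _ => Finset.prod_congr rfl fun j _ => ?_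
  rw [he, ← hb]
  have key : ∀ j' : Fin (k i), ((Equiv.piCurry (fun (i : ι) (_ : Fin (k i)) => n)).symm.trans
      (e.arrowCongr (Equiv.refl n))) g (e ⟨i, j'⟩) = g i j' := by
    intro j'
    change Sigma.uncurry g (e.symm (e ⟨i, j'⟩)) = g i j'
    rw [Equiv.symm_apply_apply]
    rfl
  rw [key, key]

lemma trace_eq_sum_entries (n m : ℕ)  (h : Fin m → Matrix (Fin n) (Fin n) ℂ) (σ : Equiv.Perm (Fin m)) :
    LinearMap.trace ℂ _
        ((PiTensorProduct.map fun i => Matrix.mulVecLin (h i)) ∘ₗ permMap n m σ)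
     = ∑ f : Fin m → Fin n, ∏ a, h a (f a) (f (σ⁻¹ a)) := by
  rw [LinearMap.trace_eq_matrix_trace ℂ (Basis.piTensorProduct (fun _ : Fin m => Pi.basisFun ℂ (Fin n))), Matrix.trace]
  refine Finset.sum_congr rfl fun f _ => ?_
  rw [Matrix.diag_apply, LinearMap.toMatrix_apply]
  simp [permMap, Basis.piTensorProduct_apply]

lemma cycle_pow_card {m : ℕ} (σ c : Equiv.Perm (Fin m)) (hc : c ∈ σ.cycleFactorsFinset) (a : Fin m)
    (ha : a ∈ c.support) : (σ ^ c.support.card) a = a := by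
  have h1 := (Equiv.Perm.mem_cycleFactorsFinset_iff.mp hc).1
  rw [← Equiv.Perm.cycleOf_pow_apply_self, ← Equiv.Perm.cycle_is_cycleOf ha hc, ← h1.orderOf,
    pow_orderOf_eq_one]
  rfl

lemma pow_mod_apply {m : ℕ} (σ : Equiv.Perm (Fin m)) (k j : ℕ) (a : Fin m)
    (ha : (σ ^ k) a = a) : (σ ^ (j % k))⁻¹ a = (σ ^ j)⁻¹ a := by
  rw [Equiv.Perm.inv_eq_iff_eq]
  have h3 : ((σ ^ k) ^ (j / k))⁻¹ a = a := by
    rw [Equiv.Perm.inv_eq_iff_eq]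
    exact (Function.IsFixedPt.perm_pow (e := σ ^ k) ha (j / k)).symm
  have h4 : (σ ^ j) = (σ ^ k) ^ (j / k) * σ ^ (j % k) := by
    rw [← pow_mul, ← pow_add, Nat.div_add_mod]
  rw [h4, mul_inv_rev, Equiv.Perm.mul_apply, h3, ← Equiv.Perm.mul_apply, mul_inv_cancel,
    Equiv.Perm.one_apply]

/-- **Trace of `(h₁ ⊗ ⋯ ⊗ h_m) ∘ π(σ)` as a product over the cycles of `σ`.**
The factor of a (nontrivial) cycle `c` of `σ`, with least element `a` and length
`k = #supp(c)`, is `tr(h_a · h_{σ⁻¹(a)} ⋯ h_{σ^{-(k-1)}(a)})`; each fixed point `a` of `σ`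
is a cycle of length one and contributes the factor `tr(h_a)`. -/
theorem trace_tensor_comp_permMap
    (n m : ℕ) (hn : 1 ≤ n) (hm : 1 ≤ m)
    (h : Fin m → Matrix (Fin n) (Fin n) ℂ) (σ : Equiv.Perm (Fin m)) :
    LinearMap.trace ℂ _
        ((PiTensorProduct.map fun i => Matrix.mulVecLin (h i)) ∘ₗ permMap n m σ)
      = (∏ c ∈ σ.cycleFactorsFinset.attach,
          Matrix.trace
            (((List.range (c : Equiv.Perm (Fin m)).support.card).map fun j =>
              h ((σ ^ j)⁻¹
                ((c : Equiv.Perm (Fin m)).support.min'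
                  (Equiv.Perm.IsCycle.nonempty_support
                    (Equiv.Perm.mem_cycleFactorsFinset_iff.mp c.2).1)))).prod))
        * ∏ a ∈ Finset.univ.filter fun a : Fin m => σ a = a, Matrix.trace (h a) := by
  classical
  rw [trace_eq_sum_entries]
  let mn : {c // c ∈ σ.cycleFactorsFinset} → Fin m := fun c =>
    (c : Equiv.Perm (Fin m)).support.min' (Equiv.Perm.IsCycle.nonempty_support
      (Equiv.Perm.mem_cycleFactorsFinset_iff.mp c.2).1)
  have hmn : ∀ c, mn c ∈ c.1.support := fun c => Finset.min'_mem _ _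
  let k : {c // c ∈ σ.cycleFactorsFinset} ⊕ {a // σ a = a} → ℕ :=
    Sum.elim (fun c => c.1.support.card) (fun _ => 1)
  let b : {c // c ∈ σ.cycleFactorsFinset} ⊕ {a // σ a = a} → ℕ → Fin m :=
    Sum.elim (fun c j => (σ ^ j)⁻¹ (mn c)) (fun a _ => a.1)
  have hk : ∀ i, NeZero (k i) := by
    rintro (c | a)
    · exact ⟨Finset.card_ne_zero_of_mem (hmn c)⟩
    · exact ⟨one_ne_zero⟩
  let F : (Σ i, Fin (k i)) → Fin m := fun p => b p.1 p.2
  have hsurj : Function.Surjective F := by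
    intro x
    by_cases hx : σ x = x
    · exact ⟨⟨Sum.inr ⟨x, hx⟩, (0 : Fin 1)⟩, rfl⟩
    · have hc : σ.cycleOf x ∈ σ.cycleFactorsFinset := by
        rw [Equiv.Perm.cycleOf_mem_cycleFactorsFinset_iff, Equiv.Perm.mem_support]
        exact hx
      have h1 := hmn ⟨_, hc⟩
      have h2 : σ.SameCycle x (mn ⟨_, hc⟩) := (Equiv.Perm.mem_support_cycleOf_iff.mp h1).1
      obtain ⟨j, hj, hj'⟩ := h2.exists_pow_eq_of_mem_support (Equiv.Perm.mem_support.mpr hx)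
      refine ⟨⟨Sum.inl ⟨_, hc⟩, (⟨j, hj⟩ : Fin _)⟩, ?_⟩
      change (σ ^ j)⁻¹ (mn ⟨_, hc⟩) = x
      rw [← hj', ← Equiv.Perm.mul_apply, inv_mul_cancel, Equiv.Perm.one_apply]
  have hcard : Fintype.card (Σ i, Fin (k i)) = Fintype.card (Fin m) := by
    rw [Fintype.card_sigma]
    simp only [Fintype.card_fin]
    rw [Fintype.sum_sum_type]
    simp only [k, Sum.elim_inl, Sum.elim_inr]
    have h1 := σ.sum_cycleType
    rw [Equiv.Perm.cycleType_def] at h1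
    have h2 : ∑ c : {c // c ∈ σ.cycleFactorsFinset}, c.1.support.card = σ.support.card := by
      rw [← h1]
      exact Finset.sum_coe_sort σ.cycleFactorsFinset (fun c => c.support.card)
    have h3 : Fintype.card {a // σ a = a} = (σ.supportᶜ).card := by
      rw [Fintype.card_subtype]
      congr 1
      ext a
      simp
    rw [h2, Finset.sum_const, smul_eq_mul, mul_one, Finset.card_univ, h3,
      Finset.card_add_card_compl, Fintype.card_fin]
  have hbij : Function.Bijective F :=
    (Fintype.bijective_iff_surjective_and_card F).mpr ⟨hsurj, hcard⟩
  rw [gen_sum h (fun a => σ⁻¹ a) k (Equiv.ofBijective F hbij) ?_ b (fun _ _ => rfl)]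
  · rw [Fintype.prod_sum_type]
    congr 1
    rw [Finset.prod_subtype (p := fun a => σ a = a) _ (by simp)]
    refine Finset.prod_congr rfl fun a _ => ?_
    simp [k, b]
  · rintro (c | a) j
    · change σ⁻¹ ((σ ^ j.val)⁻¹ (mn c)) = (σ ^ (j + 1).val)⁻¹ (mn c)
      rw [Fin.val_add, Fin.val_one', Nat.add_mod_mod]
      change _ = (σ ^ ((j.val + 1) % c.1.support.card))⁻¹ (mn c)
      rw [pow_mod_apply σ _ _ _ (cycle_pow_card σ c.1 c.2 _ (hmn c)), pow_succ, mul_inv_rev,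
        Equiv.Perm.mul_apply]
    · change σ⁻¹ a.1 = a.1
      rw [Equiv.Perm.inv_eq_iff_eq]
      exact a.2.symm
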